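/- Let S be an ordered semigroup with real multiplication satisfying axioms O1–O6. Let f₁, …, f_n and g₁, …, g_m be elements of S such that f₁ + ⋯ + f_n ≤ g₁ + ⋯ + g_m, and let f₁', …, f_n' ∈ S satisfy f_i' ≪ f_i for all i. Then there exist elements h_{i,j} ∈ S (1 ≤ i ≤ n, 1 ≤ j ≤ m) such that f_i' ≪ h_{i,1} + ⋯ + h_{i,m} ≪ f_i for all i, and h_{1,j} + ⋯ + h_{n,j} ≤ g_j for all j. -/

import Mathlib

open scoped ENNReal

/-- `CC s t` : `s` is (sequentially) compactly contained in `t`, written `s ≪ t`. -/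
def CC {S : Type*} [AddCommMonoid S] [PartialOrder S] (s t : S) : Prop :=
  ∀ u : ℕ → S, Monotone u → ∀ x : S, IsLUB (Set.range u) x → t ≤ x → ∃ n, s ≤ u n

/-- An ordered semigroup (positive, with translation invariant order) satisfying axioms O1-O5. -/
structure CuO5 (S : Type*) [AddCommMonoid S] [PartialOrder S] : Prop where
  addRightMono : ∀ {s t : S}, s ≤ t → ∀ r : S, s + r ≤ t + r
  zeroLe : ∀ s : S, 0 ≤ s
  O1 : ∀ u : ℕ → S, Monotone u → ∃ x : S, IsLUB (Set.range u) x
  O2 : ∀ s : S, ∃ u : ℕ → S, (∀ n, CC (u n) (u (n + 1))) ∧ IsLUB (Set.range u) s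
  O3 : ∀ {s₁ t₁ s₂ t₂ : S}, CC s₁ t₁ → CC s₂ t₂ → CC (s₁ + s₂) (t₁ + t₂)
  O4 : ∀ u v : ℕ → S, Monotone u → Monotone v → ∀ x y : S,
    IsLUB (Set.range u) x → IsLUB (Set.range v) y →
    IsLUB (Set.range fun n => u n + v n) (x + y)
  O5 : ∀ {s' s t : S}, CC s' s → s ≤ t → ∃ r : S, s' + r ≤ t ∧ t ≤ s + r

/-- Axioms O1-O6. -/
structure CuO6 (S : Type*) [AddCommMonoid S] [PartialOrder S] extends CuO5 S : Prop where
  O6 : ∀ {s r t : S}, s ≤ r + t → ∀ {s' : S}, CC s' s →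
    ∃ r' t' : S, s' ≤ r' + t' ∧ r' ≤ r ∧ r' ≤ s ∧ t' ≤ t ∧ t' ≤ s

/-- A functional on `S`: additive, order preserving, zero preserving map to `[0,∞]`
preserving suprema of increasing sequences. -/
structure IsFunctional {S : Type*} [AddCommMonoid S] [PartialOrder S] (l : S → ℝ≥0∞) : Prop where
  map_zero : l 0 = 0
  map_add : ∀ s t : S, l (s + t) = l s + l t
  mono : ∀ {s t : S}, s ≤ t → l s ≤ l t
  map_sup : ∀ u : ℕ → S, Monotone u → ∀ x : S, IsLUB (Set.range u) x → l x = ⨆ n, l (u n)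

/-- Real multiplication on `S` : a map `(0,∞] × S → S` additive, order preserving and
sup-(of increasing sequences)-preserving in each variable, with `1 · s = s`.
Scalars are elements of `ℝ≥0∞` required to be positive. -/
structure RealMul (S : Type*) [AddCommMonoid S] [PartialOrder S] where
  smul : ℝ≥0∞ → S → S
  add_left : ∀ {a b : ℝ≥0∞}, 0 < a → 0 < b → ∀ s : S, smul (a + b) s = smul a s + smul b s
  add_right : ∀ {a : ℝ≥0∞}, 0 < a → ∀ s t : S, smul a (s + t) = smul a s + smul a t
  mono_left : ∀ {a b : ℝ≥0∞}, 0 < a → a ≤ b → ∀ s : S, smul a s ≤ smul b s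
  mono_right : ∀ {a : ℝ≥0∞}, 0 < a → ∀ {s t : S}, s ≤ t → smul a s ≤ smul a t
  sup_left : ∀ u : ℕ → ℝ≥0∞, Monotone u → 0 < u 0 → ∀ s : S,
    IsLUB (Set.range fun n => smul (u n) s) (smul (⨆ n, u n) s)
  sup_right : ∀ {a : ℝ≥0∞}, 0 < a → ∀ u : ℕ → S, Monotone u → ∀ x : S,
    IsLUB (Set.range u) x → IsLUB (Set.range fun n => smul a (u n)) (smul a x)
  one_smul : ∀ s : S, smul 1 s = s

/-- `D` is a dense subset of `S`: every element of `S` is the supremum of a rapidly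
increasing sequence of elements of `D`. -/
def IsDenseSub {S : Type*} [AddCommMonoid S] [PartialOrder S] (D : Set S) : Prop :=
  ∀ s : S, ∃ u : ℕ → S, (∀ n, u n ∈ D) ∧ (∀ n, CC (u n) (u (n + 1))) ∧ IsLUB (Set.range u) s

/-- `m` is the least upper bound of the functionals `l₁` and `l₂` in `F(S)`
(pointwise order). -/
def IsFSup {S : Type*} [AddCommMonoid S] [PartialOrder S] (l₁ l₂ m : S → ℝ≥0∞) : Prop :=
  IsFunctional m ∧ (∀ s, l₁ s ≤ m s) ∧ (∀ s, l₂ s ≤ m s) ∧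
    ∀ d : S → ℝ≥0∞, IsFunctional d → (∀ s, l₁ s ≤ d s) → (∀ s, l₂ s ≤ d s) → ∀ s, m s ≤ d s

/-- `m` is the greatest lower bound of the functionals `l₁` and `l₂` in `F(S)`
(pointwise order). -/
def IsFInf {S : Type*} [AddCommMonoid S] [PartialOrder S] (l₁ l₂ m : S → ℝ≥0∞) : Prop :=
  IsFunctional m ∧ (∀ s, m s ≤ l₁ s) ∧ (∀ s, m s ≤ l₂ s) ∧
    ∀ d : S → ℝ≥0∞, IsFunctional d → (∀ s, d s ≤ l₁ s) → (∀ s, d s ≤ l₂ s) → ∀ s, d s ≤ m s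

/-- An isomorphism of ordered semigroups between `S` and the extended natural numbers. -/
def IsOrdSemigroupIso {S : Type*} [AddCommMonoid S] [PartialOrder S] (e : S ≃ ℕ∞) : Prop :=
  (∀ a b : S, e (a + b) = e a + e b) ∧ e 0 = 0 ∧ ∀ a b : S, a ≤ b ↔ e a ≤ e b

/-!
Axiom O6 compares each `f i` with the `g j` one sum at a time, so it refines `∑ f ≤ ∑ g` row by row
with no control of the columns. Dividing by a large integer makes the columns small: a fixed
proportion of every `f i` can be moved into the `g j` while at least half of every `g j` stays in
reserve. For the remainders `F` and `G` to satisfy `∑ F ≤ ∑ G` again, the removed part must be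
cancelled. This is possible thanks to the reserve, since `a + c ≤ b + c` and `0 ≤ c ≤ b` imply
`k • a ≤ k • b + c ≤ (k + 1) • b` for all `k`, hence `a ≤ b`. Complements exist only in the
approximate sense of O5, and the approximation is made good by averaging a `≪`-increasing sequence.

Iterating shrinks the remainder of `f` geometrically, which gives a refinement up to an error
`η • f` for every `η > 0`. As `f' ≪ f` leaves room for a factor `θ < 1`, the error is absorbed by
rescaling.
-/

section CompactContainment

variable {S T : Type*} [AddCommMonoid S] [PartialOrder S] [AddCommMonoid T] [PartialOrder T]
  {r s t x x' : S}

theorem CC.le (h : CC s t) : s ≤ t := by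
  obtain ⟨_, hst⟩ := h (fun _ => t) monotone_const t (by simp) le_rfl
  exact hst

theorem CC.trans_le (h : CC s t) (htr : t ≤ r) : CC s r :=
  fun u hu x hx hrx => h u hu x hx (htr.trans hrx)

theorem CC.of_le_of_cc (hst : s ≤ t) (h : CC t r) : CC s r := fun u hu x hx hrx =>
  (h u hu x hx hrx).imp fun _ => hst.trans

theorem CC.map_orderIso (e : S ≃o T) (h : CC s t) : CC (e s) (e t) := by
  intro u hu x hx htx
  have hlub : IsLUB (Set.range (e.symm ∘ u)) (e.symm x) := by
    rwa [Set.range_comp, e.symm.isLUB_image']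
  obtain ⟨n, hn⟩ := h _ (e.symm.monotone.comp hu) _ hlub (e.le_symm_apply.2 htx)
  exact ⟨n, e.le_symm_apply.1 hn⟩

theorem CuO5.isOrderedAddMonoid (hS : CuO5 S) : IsOrderedAddMonoid S where
  add_le_add_left _ _ hst r := hS.addRightMono hst r

theorem CuO5.zero_cc (hS : CuO5 S) (s : S) : CC 0 s := fun u _ _ _ _ => ⟨0, hS.zeroLe (u 0)⟩

theorem CuO5.sum_cc_sum (hS : CuO5 S) {ι : Type*} {I : Finset ι} {a b : ι → S}
    (h : ∀ i ∈ I, CC (a i) (b i)) : CC (∑ i ∈ I, a i) (∑ i ∈ I, b i) := by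
  induction I using Finset.cons_induction with
  | empty => simpa using hS.zero_cc 0
  | cons i I hi ih =>
    rw [Finset.forall_mem_cons] at h
    simpa only [Finset.sum_cons] using hS.O3 h.1 (ih h.2)

theorem CuO5.exists_seq_of_cc (hS : CuO5 S) (h : CC x' x) :
    ∃ u : ℕ → S, x' ≤ u 0 ∧ (∀ n, CC (u n) (u (n + 1))) ∧ ∀ n, CC (u n) x := by
  obtain ⟨u, hu, hux⟩ := hS.O2 x
  obtain ⟨n, hn⟩ := h u (monotone_nat_of_le_succ fun n => (hu n).le) x hux le_rfl
  exact ⟨fun k => u (n + k), hn, fun k => hu _, fun k => (hu _).trans_le (hux.1 ⟨_, rfl⟩)⟩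

theorem CuO5.exists_cc_between (hS : CuO5 S) (h : CC x' x) : ∃ y, CC x' y ∧ CC y x := by
  obtain ⟨u, hu₀, hu, hux⟩ := hS.exists_seq_of_cc h
  exact ⟨u 1, .of_le_of_cc hu₀ (hu 0), hux 1⟩

variable [IsOrderedAddMonoid S]

theorem CuO5.le_of_sum_le (hS : CuO5 S) {ι : Type*} [Fintype ι] {f : ι → S}
    (h : ∑ i, f i ≤ x) (i : ι) : f i ≤ x :=
  (Finset.single_le_sum (fun i _ => hS.zeroLe (f i)) (Finset.mem_univ i)).trans h

theorem CuO5.exists_cc_add_of_cc_add (hS : CuO5 S) (h : CC r (s + t)) :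
    ∃ s' t', CC s' s ∧ CC t' t ∧ r ≤ s' + t' := by
  obtain ⟨u, hu, hus⟩ := hS.O2 s
  obtain ⟨v, hv, hvt⟩ := hS.O2 t
  have hu_mono : Monotone u := monotone_nat_of_le_succ fun n => (hu n).le
  have hv_mono : Monotone v := monotone_nat_of_le_succ fun n => (hv n).le
  obtain ⟨n, hn⟩ := h _ (hu_mono.add hv_mono) _ (hS.O4 u v hu_mono hv_mono s t hus hvt) le_rfl
  exact ⟨u n, v n, (hu n).trans_le (hus.1 ⟨_, rfl⟩), (hv n).trans_le (hvt.1 ⟨_, rfl⟩), hn⟩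

theorem CuO6.exists_cc_le_of_le_sum (hS : CuO6 S) {ι : Type*} {I : Finset ι} {g : ι → S}
    (hx : CC x' x) (hxg : x ≤ ∑ i ∈ I, g i) :
    ∃ r' r : ι → S, (∀ i, CC (r' i) (r i)) ∧ (∀ i, r i ≤ x) ∧ (∀ i, r i ≤ g i) ∧
      x' ≤ ∑ i ∈ I, r' i := by
  classical
  induction I using Finset.induction_on generalizing x x' with
  | empty =>
    exact ⟨0, 0, fun _ => hS.zero_cc _, fun _ => hS.zeroLe _, fun _ => hS.zeroLe _,
      hx.le.trans (by simpa using hxg)⟩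
  | insert i I hi ih =>
    rw [Finset.sum_insert hi] at hxg
    obtain ⟨y, hxy, hyx⟩ := hS.exists_cc_between hx
    obtain ⟨a, b, hyab, hag, hax, hb, hbx⟩ := hS.O6 hxg hyx
    obtain ⟨a', b', ha, hb', hxab⟩ := hS.exists_cc_add_of_cc_add (hxy.trans_le hyab)
    obtain ⟨r', r, hr, hrb, hrg, hbr⟩ := ih hb' hb
    refine ⟨Function.update r' i a', Function.update r i a, fun j => ?_, fun j => ?_, fun j => ?_,
      ?_⟩
    · obtain rfl | hj := eq_or_ne j i <;> simp [*]
    · obtain rfl | hj := eq_or_ne j i <;> simp [*, (hrb j).trans hbx]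
    · obtain rfl | hj := eq_or_ne j i <;> simp [*]
    · rw [Finset.sum_insert hi, Finset.sum_update_of_notMem hi, Function.update_self]
      exact hxab.trans (by gcongr)

end CompactContainment

section Cancellation

theorem nsmul_add_le_nsmul_add {M : Type*} [AddCommMonoid M] [PartialOrder M]
    [IsOrderedAddMonoid M] {a b c : M} (h : a + c ≤ b + c) (k : ℕ) :
    k • a + c ≤ k • b + c := by
  induction k with
  | zero => simp
  | succ k ih =>
    calc (k + 1) • a + c = k • a + c + a := by rw [succ_nsmul, add_right_comm]
      _ ≤ k • b + c + a := by gcongr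
      _ = k • b + (a + c) := by rw [add_assoc, add_comm c]
      _ ≤ k • b + (b + c) := by gcongr
      _ = (k + 1) • b + c := by rw [succ_nsmul, add_assoc]

variable {S : Type*} [AddCommMonoid S] [PartialOrder S] [Module ℚ≥0 S] {a b c : S}

/-- Multiplication by rational scalars is continuous from below at the scalar `1`, tested along one
sequence increasing to `1`. -/
class LowerContinuousSMul (S : Type*) [PartialOrder S] [SMul ℚ≥0 S] : Prop where
  isLUB_smul (s : S) : IsLUB (Set.range fun k : ℕ => ((k + 1) / (k + 2) : ℚ≥0) • s) s

theorem monotone_add_one_div_add_two : Monotone fun k : ℕ => ((k + 1) / (k + 2) : ℚ≥0) :=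
  monotone_nat_of_le_succ fun k => by
    rw [div_le_div_iff₀ (by positivity) (by positivity), ← NNRat.coe_le_coe]
    push_cast
    linarith

theorem CuO5.eventually_le_smul_of_cc [IsOrderedModule ℚ≥0 S] [LowerContinuousSMul S]
    (hS : CuO5 S) (h : CC a b) :
    ∀ᶠ k : ℕ in Filter.atTop, a ≤ ((k + 1) / (k + 2) : ℚ≥0) • b := by
  have hmono : Monotone fun k : ℕ => ((k + 1) / (k + 2) : ℚ≥0) • b := fun _ _ hkl =>
    smul_le_smul_of_nonneg_right (monotone_add_one_div_add_two hkl) (hS.zeroLe b)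
  obtain ⟨n, hn⟩ := h _ hmono b (LowerContinuousSMul.isLUB_smul b) le_rfl
  filter_upwards [Filter.eventually_ge_atTop n] with k hk using hn.trans (hmono hk)

theorem le_of_forall_nsmul_le_nsmul_succ [PosSMulMono ℚ≥0 S] [LowerContinuousSMul S]
    (h : ∀ k : ℕ, (k + 1) • a ≤ (k + 2) • b) : a ≤ b := by
  refine (LowerContinuousSMul.isLUB_smul a).2 ?_
  rintro _ ⟨k, rfl⟩
  have hk : (0 : ℚ≥0) < k + 2 := by positivity
  change ((k + 1) / (k + 2) : ℚ≥0) • a ≤ b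
  rw [div_eq_inv_mul, mul_smul, inv_smul_le_iff_of_pos hk]
  simpa only [← Nat.cast_smul_eq_nsmul ℚ≥0, Nat.cast_add, Nat.cast_one, Nat.cast_ofNat] using h k

theorem le_of_add_le_add_of_nonneg_of_le [IsOrderedAddMonoid S] [PosSMulMono ℚ≥0 S]
    [LowerContinuousSMul S] (h : a + c ≤ b + c) (hc : 0 ≤ c) (hcb : c ≤ b) : a ≤ b :=
  le_of_forall_nsmul_le_nsmul_succ fun k =>
    calc (k + 1) • a ≤ (k + 1) • a + c := le_add_of_nonneg_right hc
      _ ≤ (k + 1) • b + c := nsmul_add_le_nsmul_add h _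
      _ ≤ (k + 1) • b + b := by gcongr
      _ = (k + 2) • b := (succ_nsmul _ _).symm

end Cancellation

section Averaging

open scoped BigOperators

variable {S : Type*} [AddCommMonoid S] [PartialOrder S] [Module ℚ≥0 S] {s t x x' : S}

theorem CC.smul [PosSMulMono ℚ≥0 S] {q : ℚ≥0} (hq : 0 < q) (h : CC s t) : CC (q • s) (q • t) :=
  h.map_orderIso (OrderIso.smulRight hq)

theorem sum_range_add_le_sum_range_add_nsmul {M : Type*} [AddCommMonoid M] [PartialOrder M]
    [IsOrderedAddMonoid M] {u : ℕ → M} {x : M} (hu : ∀ k, 0 ≤ u k) (hux : ∀ k, u k ≤ x)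
    (n d : ℕ) :
    ∑ k ∈ Finset.range n, u (d + k) ≤ ∑ k ∈ Finset.range n, u k + d • x :=
  calc ∑ k ∈ Finset.range n, u (d + k)
      ≤ ∑ k ∈ Finset.range d, u k + ∑ k ∈ Finset.range n, u (d + k) :=
        le_add_of_nonneg_left (Finset.sum_nonneg fun k _ => hu k)
    _ = ∑ k ∈ Finset.range n, u k + ∑ k ∈ Finset.range d, u (n + k) := by
        rw [← Finset.sum_range_add, add_comm, Finset.sum_range_add]
    _ ≤ ∑ k ∈ Finset.range n, u k + d • x := by
        gcongr
        simpa using Finset.sum_le_card_nsmul (Finset.range d) _ x fun k _ => hux (n + k)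

variable [IsOrderedAddMonoid S] [IsOrderedModule ℚ≥0 S]

/-- Shifting the index of a long average of a `≪`-increasing sequence changes the average only by
a small multiple of any upper bound. -/
theorem CuO5.exists_cc_chain_le_add_smul (hS : CuO5 S) (h : CC x' x) {ε : ℚ≥0} (hε : 0 < ε) :
    ∃ a b c : S, x' ≤ a ∧ CC a b ∧ CC b c ∧ c ≤ x ∧ c ≤ a + ε • x := by
  obtain ⟨u, hu₀, hu, hux⟩ := hS.exists_seq_of_cc h
  have hmono : Monotone u := monotone_nat_of_le_succ fun n => (hu n).le
  obtain ⟨n, hn⟩ := exists_nat_gt (2 / ε)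
  have hn₀ : (0 : ℚ≥0) < n := zero_le.trans_lt hn
  have hne : (Finset.range n).Nonempty := by simpa using hn₀.ne'
  have hcc (d : ℕ) : CC (𝔼 k ∈ Finset.range n, u (d + k)) (𝔼 k ∈ Finset.range n, u (d + 1 + k)) :=
    (hS.sum_cc_sum fun k _ => by simpa only [add_right_comm] using hu (d + k)).smul
      (by simpa using hn₀)
  refine ⟨𝔼 k ∈ Finset.range n, u (0 + k), _, _, ?_, hcc 0, hcc 1, ?_, ?_⟩
  · exact Finset.le_expect hne fun k _ => hu₀.trans (hmono (Nat.zero_le _))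
  · exact Finset.expect_le hne fun k _ => (hux _).le
  · have hsum := sum_range_add_le_sum_range_add_nsmul (fun k => hS.zeroLe (u k))
      (fun k => (hux k).le) n 2
    calc 𝔼 k ∈ Finset.range n, u (0 + 1 + 1 + k)
        ≤ (n : ℚ≥0)⁻¹ • (∑ k ∈ Finset.range n, u k + 2 • x) := by
          simpa [Finset.expect] using smul_le_smul_of_nonneg_left hsum (zero_le (a := (n : ℚ≥0)⁻¹))
      _ = 𝔼 k ∈ Finset.range n, u (0 + k) + (2 / n : ℚ≥0) • x := by
          simp [Finset.expect, ← Nat.cast_smul_eq_nsmul ℚ≥0, smul_smul, div_eq_inv_mul]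
      _ ≤ 𝔼 k ∈ Finset.range n, u (0 + k) + ε • x := by
          gcongr
          · exact hS.zeroLe x
          · exact ((div_lt_comm₀ hε hn₀).1 hn).le

end Averaging

section Refinement

variable {S : Type*} [AddCommMonoid S] [PartialOrder S] [Module ℚ≥0 S] {ι κ : Type*} [Fintype ι]
  [Fintype κ]

variable (ι κ S) in
/-- The refinement property for families indexed by `ι` and `κ`, up to an error `η • f`. -/
def HasRefinementUpTo (η : ℚ≥0) : Prop :=
  ∀ ⦃f f' : ι → S⦄ ⦃g : κ → S⦄, ∑ i, f i ≤ ∑ j, g j → (∀ i, CC (f' i) (f i)) →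
    ∃ h : ι → κ → S, (∀ i, ∑ j, h i j ≤ f i) ∧ (∀ j, ∑ i, h i j ≤ g j) ∧
      ∀ i, f' i ≤ ∑ j, h i j + η • f i

theorem CuO5.hasRefinementUpTo_one (hS : CuO5 S) : HasRefinementUpTo S ι κ 1 :=
  fun f _ g _ hf => ⟨0, fun i => by simpa using hS.zeroLe (f i),
    fun j => by simpa using hS.zeroLe (g j), fun i => by simpa using (hf i).le⟩

variable [IsOrderedAddMonoid S]

/-- The reserve `b ≤ r` is what the cancellation law `le_of_add_le_add_of_nonneg_of_le` requires. -/
theorem CuO5.exists_large_complement (hS : CuO5 S) {a b g : S} (hab : CC a b)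
    (hbg : b ≤ (1 / 2 : ℚ≥0) • g) : ∃ r, a + r ≤ g ∧ g ≤ b + r ∧ b ≤ r := by
  have half_add_half : (1 / 2 : ℚ≥0) • g + (1 / 2 : ℚ≥0) • g = g := by
    rw [← add_smul, add_halves, one_smul]
  obtain ⟨r, har, hbr⟩ := hS.O5 hab hbg
  refine ⟨r + (1 / 2 : ℚ≥0) • g, ?_, ?_, hbg.trans (le_add_of_nonneg_left (hS.zeroLe r))⟩
  · calc a + (r + (1 / 2 : ℚ≥0) • g) = a + r + (1 / 2 : ℚ≥0) • g := (add_assoc _ _ _).symm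
      _ ≤ (1 / 2 : ℚ≥0) • g + (1 / 2 : ℚ≥0) • g := by gcongr
      _ = g := half_add_half
  · calc g = (1 / 2 : ℚ≥0) • g + (1 / 2 : ℚ≥0) • g := half_add_half.symm
      _ ≤ b + r + (1 / 2 : ℚ≥0) • g := by gcongr
      _ = b + (r + (1 / 2 : ℚ≥0) • g) := add_assoc _ _ _

variable [IsOrderedModule ℚ≥0 S]

theorem sum_le_smul_of_forall_le_smul {a : ι → S} {s : S} {p t : ℚ≥0} (h : ∀ i, a i ≤ p • s)
    (hp : Fintype.card ι * p ≤ t) (hs : 0 ≤ s) : ∑ i, a i ≤ t • s :=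
  calc ∑ i, a i ≤ Fintype.card ι • p • s := Finset.sum_le_card_nsmul _ _ _ fun i _ => h i
    _ = (Fintype.card ι * p) • s := by rw [mul_smul, Nat.cast_smul_eq_nsmul]
    _ ≤ t • s := smul_le_smul_of_nonneg_right hp hs

theorem smul_add_smul_le {s x y : S} {θ η t : ℚ≥0} (hs : 0 ≤ s) (hx : x ≤ s) (hy : y ≤ t • s)
    (h : θ * (1 + η * t) ≤ 1) : θ • (x + η • y) ≤ s :=
  calc θ • (x + η • y) ≤ θ • (s + η • t • s) := by gcongr
    _ = (θ * (1 + η * t)) • s := by module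
    _ ≤ s := smul_le_of_le_one_left hs h

theorem HasRefinementUpTo.mono (hS : CuO5 S) {η ρ : ℚ≥0} (hρη : ρ ≤ η)
    (hρ : HasRefinementUpTo S ι κ ρ) : HasRefinementUpTo S ι κ η := fun f _ _ hfg hf =>
  (hρ hfg hf).imp fun _ ⟨hhf, hhg, hfh⟩ => ⟨hhf, hhg, fun i => (hfh i).trans <|
    add_le_add_right (smul_le_smul_of_nonneg_right hρη (hS.zeroLe (f i))) _⟩

/-- O5 yields no exact complement `F` of `∑ j, b j` in `x`. Averaging the chain `a ≪ b ≪ c` first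
makes the defect at most `ε • x`. -/
theorem CuO6.exists_row_complement (hS : CuO6 S) {x x' : S} {g : κ → S} (hx : CC x' x)
    (hxg : x ≤ ∑ j, g j) {p ε : ℚ≥0} (hp : 0 < p) (hκ : Fintype.card κ * p ≤ 1) (hε : 0 < ε) :
    ∃ (a b : κ → S) (F : S), (∀ j, CC (a j) (b j)) ∧ (∀ j, b j ≤ p • g j) ∧
      ∑ j, b j + F ≤ x ∧ x ≤ ∑ j, a j + ε • x + F ∧ F + p • x' ≤ x := by
  obtain ⟨r', r, hr, hrx, hrg, hxr⟩ := hS.exists_cc_le_of_le_sum hx hxg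
  choose a b c hra hab hbc hcr hca using fun j =>
    hS.exists_cc_chain_le_add_smul ((hr j).smul hp) hε
  have hr_sum : ∑ j, p • r j ≤ x := by
    simpa using sum_le_smul_of_forall_le_smul
      (fun j => smul_le_smul_of_nonneg_left (hrx j) hp.le) hκ (hS.zeroLe x)
  have hcx : ∑ j, c j ≤ x := (Finset.sum_le_sum fun j _ => hcr j).trans hr_sum
  obtain ⟨F, hbF, hcF⟩ := hS.O5 (hS.sum_cc_sum fun j _ => hbc j) hcx
  refine ⟨a, b, F, hab, fun j => ?_, hbF, ?_, ?_⟩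
  · exact ((hbc j).le.trans (hcr j)).trans (smul_le_smul_of_nonneg_left (hrg j) hp.le)
  · calc x ≤ ∑ j, c j + F := hcF
      _ ≤ ∑ j, (a j + ε • p • r j) + F := by gcongr with j; exact hca j
      _ = ∑ j, a j + ε • ∑ j, p • r j + F := by rw [Finset.sum_add_distrib, Finset.smul_sum]
      _ ≤ ∑ j, a j + ε • x + F := by gcongr
  · calc F + p • x' ≤ F + p • ∑ j, r' j := by gcongr
      _ = F + ∑ j, p • r' j := by rw [Finset.smul_sum]
      _ ≤ F + ∑ j, b j := by gcongr with j; exact (hra j).trans (hab j).le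
      _ ≤ x := by rwa [add_comm]

variable [LowerContinuousSMul S]

theorem CuO5.exists_column_complement (hS : CuO5 S) {a b : ι → κ → S} {f F : ι → S} {g : κ → S}
    (hfg : ∑ i, f i ≤ ∑ j, g j) (hab : ∀ i j, CC (a i j) (b i j))
    (hbf : ∀ i, ∑ j, b i j + F i ≤ f i) (hbg : ∀ j, ∑ i, b i j ≤ (1 / 2 : ℚ≥0) • g j) :
    ∃ G : κ → S, (∀ j, ∑ i, a i j + G j ≤ g j) ∧ ∑ i, F i ≤ ∑ j, G j := by
  choose G haG hgG hbG using fun j =>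
    hS.exists_large_complement (hS.sum_cc_sum fun i _ => hab i j) (hbg j)
  refine ⟨G, haG, le_of_add_le_add_of_nonneg_of_le (c := ∑ j, ∑ i, b i j) ?_ (hS.zeroLe _)
    (Finset.sum_le_sum fun j _ => hbG j)⟩
  calc ∑ i, F i + ∑ j, ∑ i, b i j = ∑ i, (∑ j, b i j + F i) := by
        rw [Finset.sum_comm, Finset.sum_add_distrib, add_comm]
    _ ≤ ∑ i, f i := Finset.sum_le_sum fun i _ => hbf i
    _ ≤ ∑ j, g j := hfg
    _ ≤ ∑ j, (∑ i, b i j + G j) := Finset.sum_le_sum fun j _ => hgG j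
    _ = ∑ j, G j + ∑ j, ∑ i, b i j := by rw [Finset.sum_add_distrib, add_comm]

theorem CuO6.exists_partial_refinement (hS : CuO6 S) {f f' : ι → S} {g : κ → S}
    (hfg : ∑ i, f i ≤ ∑ j, g j) (hf : ∀ i, CC (f' i) (f i)) {p ε : ℚ≥0} (hp : 0 < p)
    (hι : Fintype.card ι * p ≤ 1 / 2) (hκ : Fintype.card κ * p ≤ 1) (hε : 0 < ε) :
    ∃ (h : ι → κ → S) (F : ι → S) (G : κ → S), (∀ i, ∑ j, h i j + F i ≤ f i) ∧
      (∀ j, ∑ i, h i j + G j ≤ g j) ∧ ∑ i, F i ≤ ∑ j, G j ∧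
      (∀ i, f i ≤ ∑ j, h i j + ε • f i + F i) ∧ ∀ i, F i + p • f' i ≤ f i := by
  choose a b F hab hbg hbF hfa hF using fun i =>
    hS.exists_row_complement (hf i) (hS.le_of_sum_le hfg i) hp hκ hε
  obtain ⟨G, haG, hFG⟩ := hS.exists_column_complement hfg hab hbF fun j =>
    sum_le_smul_of_forall_le_smul (fun i => hbg i j) hι (hS.zeroLe (g j))
  refine ⟨a, F, G, fun i => le_trans ?_ (hbF i), haG, hFG, hfa, hF⟩
  gcongr with j
  exact (hab i j).le

theorem CuO5.le_smul_of_add_smul_le (hS : CuO5 S) {x y z w : S} {p q ε : ℚ≥0} (hpq : p + q = 1)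
    (hle : p ≤ q) (hw : w + p • x ≤ y) (hyx : y ≤ x + ε • z) (hyz : y ≤ z) :
    w ≤ (q + p * ε) • z := by
  have hcancel : w ≤ q • y + (p * ε) • z := by
    refine le_of_add_le_add_of_nonneg_of_le (c := p • y) ?_ (hS.zeroLe _) ?_
    · calc w + p • y ≤ w + p • (x + ε • z) := by gcongr
        _ = w + p • x + (p * ε) • z := by rw [smul_add, mul_smul, add_assoc]
        _ ≤ y + (p * ε) • z := by gcongr
        _ = (p + q) • y + (p * ε) • z := by rw [hpq, one_smul]
        _ = q • y + (p * ε) • z + p • y := by rw [add_smul]; abel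
    · calc p • y ≤ q • y := smul_le_smul_of_nonneg_right hle (hS.zeroLe y)
        _ ≤ q • y + (p * ε) • z := le_add_of_nonneg_right (hS.zeroLe _)
  calc w ≤ q • y + (p * ε) • z := hcancel
    _ ≤ q • z + (p * ε) • z := by gcongr
    _ = (q + p * ε) • z := (add_smul _ _ _).symm

theorem CuO6.exists_cc_partial_refinement (hS : CuO6 S) {f f' : ι → S} {g : κ → S}
    (hfg : ∑ i, f i ≤ ∑ j, g j) (hf : ∀ i, CC (f' i) (f i)) {p q ε : ℚ≥0} (hp : 0 < p)
    (hpq : p + q = 1) (hle : p ≤ q) (hι : Fintype.card ι * p ≤ 1 / 2)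
    (hκ : Fintype.card κ * p ≤ 1) (hε : 0 < ε) :
    ∃ (h : ι → κ → S) (F F' : ι → S) (G : κ → S), (∀ i, ∑ j, h i j + F i ≤ f i) ∧
      (∀ j, ∑ i, h i j + G j ≤ g j) ∧ ∑ i, F i ≤ ∑ j, G j ∧ (∀ i, CC (F' i) (F i)) ∧
      (∀ i, f' i ≤ ∑ j, h i j + ε • f i + F' i) ∧ ∀ i, F i ≤ (q + p / 2) • f i := by
  choose a x y hfa hax hxy hyf hya using fun i =>
    hS.exists_cc_chain_le_add_smul (hf i) (half_pos (zero_lt_one' ℚ≥0))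
  obtain ⟨h, F, G, hF, hG, hFG, hyh, hFx⟩ := hS.exists_partial_refinement
    ((Finset.sum_le_sum fun i _ => hyf i).trans hfg) hxy hp hι hκ hε
  choose s F' hs hF' hsF using fun i => hS.exists_cc_add_of_cc_add ((hxy i).trans_le (hyh i))
  refine ⟨h, F, F', G, fun i => (hF i).trans (hyf i), hG, hFG, hF', fun i => ?_, fun i => ?_⟩
  · calc f' i ≤ x i := (hfa i).trans (hax i).le
      _ ≤ s i + F' i := hsF i
      _ ≤ ∑ j, h i j + ε • y i + F' i := by gcongr; exact (hs i).le
      _ ≤ ∑ j, h i j + ε • f i + F' i := by gcongr; exact hyf i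
  · have hyx : y i ≤ x i + (1 / 2 : ℚ≥0) • f i := (hya i).trans (by gcongr; exact (hax i).le)
    simpa [div_eq_mul_inv] using hS.le_smul_of_add_smul_le hpq hle (hFx i) hyx (hyf i)

theorem exists_pos_add_eq_one_and_mul_le (n : ℕ) :
    ∃ p q : ℚ≥0, 0 < p ∧ p + q = 1 ∧ p ≤ q ∧ n * p ≤ 1 / 2 := by
  refine ⟨1 / (2 * n + 2), (2 * n + 1) / (2 * n + 2), by positivity, ?_, ?_, ?_⟩
  · rw [← add_div, div_eq_one_iff_eq (by positivity)]
    ring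
  · gcongr
    exact le_add_self
  · rw [mul_one_div, div_le_div_iff₀ (by positivity) two_pos, one_mul, mul_comm]
    exact le_self_add

theorem CuO6.exists_contraction (hS : CuO6 S) :
    ∃ τ : ℚ≥0, 0 < τ ∧ τ < 1 ∧
      ∀ ρ > 0, HasRefinementUpTo S ι κ ρ → HasRefinementUpTo S ι κ (τ * ρ) := by
  obtain ⟨p, q, hp, hpq, hle, hcard⟩ :=
    exists_pos_add_eq_one_and_mul_le (Fintype.card ι + Fintype.card κ)
  have hι : Fintype.card ι * p ≤ 1 / 2 := le_trans (by gcongr; simp) hcard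
  have hκ : Fintype.card κ * p ≤ 1 := le_trans (by gcongr; simp) (hcard.trans (by norm_num))
  refine ⟨q + p / 2 + p / 4, by positivity, ?_, fun ρ hρ href f f' g hfg hf => ?_⟩
  · calc q + p / 2 + p / 4 < q + p / 2 + p / 2 := by gcongr; norm_num
      _ = 1 := by rw [add_assoc, add_halves, add_comm, hpq]
  · obtain ⟨h, F, F', G, hF, hG, hFG, hFF, hf', hFf⟩ := hS.exists_cc_partial_refinement hfg hf
      hp hpq hle hι hκ (ε := p / 4 * ρ) (by positivity)
    obtain ⟨u, huF, huG, hFu⟩ := href hFG hFF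
    refine ⟨h + u, fun i => ?_, fun j => ?_, fun i => ?_⟩ <;>
      simp only [Pi.add_apply, Finset.sum_add_distrib]
    · exact le_trans (by gcongr; exact huF i) (hF i)
    · exact le_trans (by gcongr; exact huG j) (hG j)
    · calc f' i ≤ ∑ j, h i j + (p / 4 * ρ) • f i + F' i := hf' i
        _ ≤ ∑ j, h i j + (p / 4 * ρ) • f i + (∑ j, u i j + ρ • F i) := by gcongr; exact hFu i
        _ ≤ ∑ j, h i j + (p / 4 * ρ) • f i + (∑ j, u i j + ρ • (q + p / 2) • f i) := by
          gcongr
          exact hFf i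
        _ = ∑ j, h i j + ∑ j, u i j + ((q + p / 2 + p / 4) * ρ) • f i := by module

theorem CuO6.hasRefinementUpTo (hS : CuO6 S) {η : ℚ≥0} (hη : 0 < η) :
    HasRefinementUpTo S ι κ η := by
  obtain ⟨τ, hτ₀, hτ₁, hcontr⟩ := hS.exists_contraction (ι := ι) (κ := κ)
  have hpow (k : ℕ) : HasRefinementUpTo S ι κ (τ ^ k) := by
    induction k with
    | zero => simpa using hS.hasRefinementUpTo_one
    | succ k ih => simpa [pow_succ'] using hcontr (τ ^ k) (pow_pos hτ₀ k) ih
  obtain ⟨k, hk⟩ := exists_pow_lt_of_lt_one hη hτ₁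
  exact (hpow k).mono hS.toCuO5 hk.le

theorem exists_pos_mul_one_add_mul_le_one {θ : ℚ≥0} (hθ : θ < 1) (n : ℕ) :
    ∃ η > 0, θ * (1 + η * n) ≤ 1 := by
  refine ⟨(1 - θ) / (n + 1), div_pos (tsub_pos_of_lt hθ) (by positivity), ?_⟩
  calc θ * (1 + (1 - θ) / (n + 1) * n) = θ + θ * ((1 - θ) / (n + 1) * n) := by ring
    _ ≤ θ + 1 * ((1 - θ) / (n + 1) * (n + 1)) := by gcongr; exact le_self_add
    _ = 1 := by rw [one_mul, div_mul_cancel₀ _ (by positivity), add_tsub_cancel_of_le hθ.le]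

/-- The error `η • y i` left by `hasRefinementUpTo` is put back by adding `η • r i j` to each entry,
and the factor `θ` restores the upper bounds. -/
theorem CuO6.exists_refinement_smul (hS : CuO6 S) {f f' : ι → S} {g : κ → S}
    (hfg : ∑ i, f i ≤ ∑ j, g j) (hf : ∀ i, CC (f' i) (f i)) {θ : ℚ≥0} (hθ : θ < 1) :
    ∃ h : ι → κ → S, (∀ i, θ • f' i ≤ ∑ j, h i j) ∧ (∀ i, ∑ j, h i j ≤ f i) ∧
      ∀ j, ∑ i, h i j ≤ g j := by
  choose y hfy hyf using fun i => hS.exists_cc_between (hf i)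
  choose r' r hr hrf hrg hyr using fun i =>
    hS.exists_cc_le_of_le_sum (hyf i) (hS.le_of_sum_le hfg i)
  obtain ⟨η, hη, hηN⟩ := exists_pos_mul_one_add_mul_le_one hθ (Fintype.card ι + Fintype.card κ)
  obtain ⟨u, huy, hug, hfu⟩ := hS.hasRefinementUpTo hη
    ((Finset.sum_le_sum fun i _ => (hyf i).le).trans hfg) hfy
  refine ⟨fun i j => θ • (u i j + η • r i j), fun i => ?_, fun i => ?_, fun j => ?_⟩ <;>
    simp only [← Finset.smul_sum, Finset.sum_add_distrib]
  · have hyr' : y i ≤ ∑ j, r i j := (hyr i).trans (Finset.sum_le_sum fun j _ => (hr i j).le)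
    gcongr
    exact (hfu i).trans (by gcongr)
  · refine smul_add_smul_le (hS.zeroLe _) ((huy i).trans (hyf i).le) ?_ hηN
    exact sum_le_smul_of_forall_le_smul (p := 1) (by simpa using hrf i) (by simp) (hS.zeroLe _)
  · refine smul_add_smul_le (hS.zeroLe _) (hug j) ?_ hηN
    exact sum_le_smul_of_forall_le_smul (p := 1) (by simpa using (hrg · j)) (by simp) (hS.zeroLe _)

theorem CuO6.exists_refinement (hS : CuO6 S) {f f' : ι → S} {g : κ → S}
    (hfg : ∑ i, f i ≤ ∑ j, g j) (hf : ∀ i, CC (f' i) (f i)) :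
    ∃ h : ι → κ → S, (∀ i, CC (f' i) (∑ j, h i j) ∧ CC (∑ j, h i j) (f i)) ∧
      ∀ j, ∑ i, h i j ≤ g j := by
  choose w hfw hwf using fun i => hS.exists_cc_between (hf i)
  choose y hwy hyf using fun i => hS.exists_cc_between (hwf i)
  choose x hyx hxf using fun i => hS.exists_cc_between (hyf i)
  obtain ⟨k, hk⟩ :=
    (Filter.eventually_all.2 fun i => hS.eventually_le_smul_of_cc (hwy i)).exists
  have hθ : (k + 1) / (k + 2) < (1 : ℚ≥0) := by
    rw [div_lt_one (by positivity)]
    gcongr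
    norm_num
  obtain ⟨h, hyh, hhx, hhg⟩ := hS.exists_refinement_smul
    ((Finset.sum_le_sum fun i _ => (hxf i).le).trans hfg) hyx hθ
  exact ⟨h, fun i => ⟨(hfw i).trans_le ((hk i).trans (hyh i)), .of_le_of_cc (hhx i) (hxf i)⟩, hhg⟩

end Refinement

section RealMultiplication

theorem addMonoidHom_nnrat_map_mul {R : Type*} [Semiring R] (φ : ℚ≥0 →+ R) (h : φ 1 = 1)
    (p q : ℚ≥0) : φ (p * q) = φ p * φ q := by
  have hden : p.den • p = p.num • 1 := by simp [p.den_mul_eq_num]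
  have hq : p.den • (q / p.den) = q := by
    rw [nsmul_eq_mul, mul_div_cancel₀ _ (Nat.cast_ne_zero.2 p.den_ne_zero)]
  have hpq : p.num • (q / p.den) = p * q := by
    rw [nsmul_eq_mul, mul_div_left_comm, p.num_div_den, mul_comm]
  calc φ (p * q) = p.num • φ 1 * φ (q / p.den) := by
        rw [h, smul_mul_assoc, one_mul, ← map_nsmul, hpq]
    _ = p.den • φ p * φ (q / p.den) := by rw [← map_nsmul, ← hden, map_nsmul]
    _ = φ p * φ q := by rw [smul_mul_assoc, ← mul_smul_comm, ← map_nsmul, hq]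

open scoped NNReal

theorem coe_coe_nnrat_pos {q : ℚ≥0} (hq : q ≠ 0) : 0 < ((q : ℝ≥0) : ℝ≥0∞) := by
  exact_mod_cast pos_iff_ne_zero.2 hq

namespace RealMul

variable {S : Type*} [AddCommMonoid S] [PartialOrder S]

theorem smul_natCast (rm : RealMul S) {n : ℕ} (hn : 0 < n) (s : S) : rm.smul n s = n • s := by
  induction n, hn using Nat.le_induction with
  | base => simpa using rm.one_smul s
  | succ n hn ih =>
    rw [Nat.cast_succ, rm.add_left (by exact_mod_cast hn) one_pos, ih, rm.one_smul, succ_nsmul]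

theorem smul_zero (rm : RealMul S) (hS : CuO5 S) {a : ℝ≥0∞} (ha₀ : 0 < a) (ha : a ≠ ∞) :
    rm.smul a 0 = 0 := by
  obtain ⟨n, hn⟩ := ENNReal.exists_nat_gt ha
  have hn₀ : 0 < n := by exact_mod_cast ha₀.trans hn
  refine le_antisymm ?_ (hS.zeroLe _)
  simpa [rm.smul_natCast hn₀] using rm.mono_left ha₀ hn.le 0

/-- The action of the nonnegative rationals on `S` given by a real multiplication, with the scalar
`0` acting as zero whatever the value of `rm.smul 0`. -/
noncomputable def nnratSMulHom (rm : RealMul S) (hS : CuO5 S) : ℚ≥0 →+ S →+ S where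
  toFun q := if hq : q = 0 then 0 else
    { toFun := rm.smul (q : ℝ≥0)
      map_zero' := rm.smul_zero hS (coe_coe_nnrat_pos hq) ENNReal.coe_ne_top
      map_add' := rm.add_right (coe_coe_nnrat_pos hq) }
  map_zero' := dif_pos rfl
  map_add' p q := by
    obtain rfl | hp := eq_or_ne p 0
    · simp only [zero_add, dif_pos]
    obtain rfl | hq := eq_or_ne q 0
    · simp only [add_zero, dif_pos]
    ext s
    simpa [hp, hq] using rm.add_left (coe_coe_nnrat_pos hp) (coe_coe_nnrat_pos hq) s

theorem nnratSMulHom_apply (rm : RealMul S) (hS : CuO5 S) {q : ℚ≥0} (hq : q ≠ 0) (s : S) :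
    rm.nnratSMulHom hS q s = rm.smul (q : ℝ≥0) s := by
  simp [nnratSMulHom, hq]

/-- The action `nnratSMulHom` as a ring homomorphism. -/
noncomputable def nnratToEnd (rm : RealMul S) (hS : CuO5 S) : ℚ≥0 →+* AddMonoid.End S :=
  have map_one : rm.nnratSMulHom hS 1 = AddMonoidHom.id S := by
    ext s
    simpa [rm.nnratSMulHom_apply hS one_ne_zero] using rm.one_smul s
  { rm.nnratSMulHom hS with
    map_one' := map_one
    map_mul' := addMonoidHom_nnrat_map_mul (R := AddMonoid.End S) (rm.nnratSMulHom hS) map_one }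

/-- The `ℚ≥0`-module structure on `S` obtained by restricting a real multiplication. -/
noncomputable abbrev nnratModule (rm : RealMul S) (hS : CuO5 S) : Module ℚ≥0 S :=
  Module.compHom S (rm.nnratToEnd hS)

theorem nnratModule_smul_def (rm : RealMul S) (hS : CuO5 S) {q : ℚ≥0} (hq : q ≠ 0) (s : S) :
    letI := rm.nnratModule hS
    q • s = rm.smul (q : ℝ≥0) s :=
  rm.nnratSMulHom_apply hS hq s

theorem isOrderedModule (rm : RealMul S) (hS : CuO5 S) :
    letI := rm.nnratModule hS
    IsOrderedModule ℚ≥0 S :=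
  letI := rm.nnratModule hS
  { smul_le_smul_of_nonneg_left := fun q _ s t hst => by
      obtain rfl | hq := eq_or_ne q 0
      · simp
      simpa only [rm.nnratModule_smul_def hS hq] using rm.mono_right (coe_coe_nnrat_pos hq) hst
    smul_le_smul_of_nonneg_right := fun s _ p q hpq => by
      obtain ⟨r, rfl⟩ := exists_add_of_le hpq
      have := hS.isOrderedAddMonoid
      rw [add_smul]
      exact le_add_of_nonneg_right (hS.zeroLe _) }

theorem lowerContinuousSMul (rm : RealMul S) (hS : CuO5 S) :
    letI := rm.nnratModule hS
    LowerContinuousSMul S := by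
  let := rm.nnratModule hS
  refine ⟨fun s => ?_⟩
  set v : ℕ → ℝ≥0∞ := fun k => ((((k + 1) / (k + 2) : ℚ≥0) : ℝ≥0) : ℝ≥0∞) with hv
  have hmono : Monotone v := fun _ _ hkl =>
    ENNReal.coe_le_coe.2 (NNRat.cast_le.2 (monotone_add_one_div_add_two hkl))
  have htend : Filter.Tendsto v Filter.atTop (nhds 1) := by
    rw [hv, ← ENNReal.coe_one, ENNReal.tendsto_coe, ← NNReal.tendsto_coe]
    refine ((Filter.tendsto_add_atTop_iff_nat 1).2
      (tendsto_natCast_div_add_atTop (1 : ℝ))).congr fun k => ?_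
    push_cast
    ring
  have hsup : ⨆ k, v k = 1 := tendsto_nhds_unique (tendsto_atTop_iSup hmono) htend
  have hlub := rm.sup_left v hmono (coe_coe_nnrat_pos (by positivity)) s
  rw [hsup, rm.one_smul] at hlub
  convert hlub using 3 with k
  exact rm.nnratModule_smul_def hS (by positivity) s

end RealMul

end RealMultiplication

/-- refinement property in an O1-O6 semigroup with real multiplication. -/
theorem refinement {S : Type*} [AddCommMonoid S] [PartialOrder S]
    (hS : CuO6 S) (rm : RealMul S) {n m : ℕ} (hn : 0 < n) (hm : 0 < m)
    (f f' : Fin n → S) (g : Fin m → S)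
    (hfg : ∑ i, f i ≤ ∑ j, g j) (hf' : ∀ i, CC (f' i) (f i)) :
    ∃ h : Fin n → Fin m → S,
      (∀ i, CC (f' i) (∑ j, h i j) ∧ CC (∑ j, h i j) (f i)) ∧
      ∀ j, ∑ i, h i j ≤ g j := by
  have := hS.isOrderedAddMonoid
  let := rm.nnratModule hS.toCuO5
  have := rm.isOrderedModule hS.toCuO5
  have := rm.lowerContinuousSMul hS.toCuO5
  exact hS.exists_refinement hfg hf'
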